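/- Let F be a finite field with q elements, let b be a generator of the cyclic group Fˣ, and let ζ ∈ ℂ be a primitive (q−1)-th root of unity. On ℓ²(F[T]) with the operators U^a (U^a ξ_r = ξ_{a+r}) and S_c (S_c ξ_r = ξ_{c r} for c ≠ 0), define for k = 0, …, q−2 the operator W_k := (q−1)^{-1/2} Σ_{n=0}^{q−2} ζ^{−kn} U^{b^n} S_T, where b^n ∈ F is viewed as a constant polynomial. Then S_T and W_0, …, W_{q−2} are q isometries whose range projections are mutually orthogonal and sum to the identity (S_T S_T* + Σ_{k=0}^{q−2} W_k W_k* = 1), and conjugation by the unitary S_b satisfies S_b S_T S_b* = S_T and S_b W_k S_b* = ζ^{k} W_k for all k. -/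

import Mathlib

open scoped Classical

/-- The Hilbert space `ℓ²(F[T])`. -/
noncomputable abbrev l2Poly (F : Type*) [Field F] := lp (fun _ : Polynomial F => ℂ) 2

/-- The isometry `W_k = (q-1)^{-1/2} Σ_{n=0}^{q-2} ζ^{-kn} U^{b^n} S_T`. -/
noncomputable def Wop (F : Type*) [Field F] [Fintype F]
    (U : Polynomial F → (l2Poly F →L[ℂ] l2Poly F))
    (S : Polynomial F → (l2Poly F →L[ℂ] l2Poly F)) (b : Fˣ) (ζ : ℂ) (k : ℕ) :
    l2Poly F →L[ℂ] l2Poly F :=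
  ((Real.sqrt ((Fintype.card F : ℝ) - 1) : ℂ))⁻¹ •
    ∑ n ∈ Finset.range (Fintype.card F - 1),
      (ζ ^ (k * n))⁻¹ • (U (Polynomial.C ((b ^ n : Fˣ) : F)) * S Polynomial.X)


theorem aux_orth {ζ : ℂ} {m : ℕ} (hm : 0 < m) (hζ : IsPrimitiveRoot ζ m) {k l : ℕ} (hk : k < m)
    (hl : l < m) :
    ∑ n ∈ Finset.range m, (star ((ζ ^ (k * n))⁻¹)) * (ζ ^ (l * n))⁻¹ =
      if k = l then (m : ℂ) else 0 := by
  have h0 : ζ ≠ 0 := hζ.ne_zero hm.ne'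
  have hn : ‖ζ‖ = 1 := hζ.norm'_eq_one hm.ne'
  have hs : star ζ = ζ⁻¹ := by
    rw [Complex.inv_def, Complex.normSq_eq_norm_sq, hn]; simp
  have e : ∀ n, (star ((ζ ^ (k * n))⁻¹)) * (ζ ^ (l * n))⁻¹ = (ζ ^ k / ζ ^ l) ^ n := by
    intro n
    rw [star_inv₀, star_pow, hs, div_pow, ← pow_mul, ← pow_mul, inv_pow, inv_inv, div_eq_mul_inv]
  simp only [e]
  split_ifs with h
  · subst h
    simp [h0]
  · have hne : ζ ^ k / ζ ^ l ≠ 1 := by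
      intro h1
      rw [div_eq_one_iff_eq (pow_ne_zero _ h0)] at h1
      exact h (hζ.pow_inj hk hl h1)
    rw [geom_sum_eq hne, div_pow, ← pow_mul, ← pow_mul, mul_comm k, mul_comm l, pow_mul, pow_mul,
      hζ.pow_eq_one]
    simp

theorem aux_WW {A : Type*} [Ring A] [StarRing A] [Algebra ℂ A] [StarModule ℂ A]
    {ζ : ℂ} {m : ℕ} (hm : 0 < m) (hζ : IsPrimitiveRoot ζ m) (V : ℕ → A) (c : ℂ)
    (hc : star c * c * m = 1)
    (hV : ∀ i < m, ∀ j < m, star (V i) * V j = if i = j then 1 else 0) {k l : ℕ} (hk : k < m)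
    (hl : l < m) :
    star (c • ∑ n ∈ Finset.range m, (ζ ^ (k * n))⁻¹ • V n) *
      (c • ∑ n ∈ Finset.range m, (ζ ^ (l * n))⁻¹ • V n) = if k = l then 1 else 0 := by
  have e : (∑ n ∈ Finset.range m, star ((ζ ^ (k * n))⁻¹) • star (V n)) *
      (∑ n ∈ Finset.range m, (ζ ^ (l * n))⁻¹ • V n) =
      (∑ n ∈ Finset.range m, (star ((ζ ^ (k * n))⁻¹)) * (ζ ^ (l * n))⁻¹) • (1 : A) := by
    rw [Finset.sum_mul, Finset.sum_smul]
    refine Finset.sum_congr rfl fun i hi => ?_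
    rw [Finset.mul_sum, Finset.sum_eq_single i]
    · rw [smul_mul_smul_comm, hV i (Finset.mem_range.1 hi) i (Finset.mem_range.1 hi), if_pos rfl]
    · intro j hj hji
      rw [smul_mul_smul_comm, hV i (Finset.mem_range.1 hi) j (Finset.mem_range.1 hj),
        if_neg (Ne.symm hji), smul_zero]
    · intro h; exact absurd hi h
  rw [star_smul, star_sum]
  simp only [star_smul]
  rw [smul_mul_smul_comm, e, aux_orth hm hζ hk hl, smul_smul]
  split_ifs
  · rw [hc, one_smul]
  · simp

theorem aux_sum {A : Type*} [Ring A] [StarRing A] [Algebra ℂ A] [StarModule ℂ A]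
    {ζ : ℂ} {m : ℕ} (hm : 0 < m) (hζ : IsPrimitiveRoot ζ m) (V : ℕ → A) (c : ℂ)
    (hc : star c * c * m = 1) :
    ∑ k ∈ Finset.range m, (c • ∑ n ∈ Finset.range m, (ζ ^ (k * n))⁻¹ • V n) *
      star (c • ∑ n ∈ Finset.range m, (ζ ^ (k * n))⁻¹ • V n) =
      ∑ n ∈ Finset.range m, V n * star (V n) := by
  have e : ∀ k, (c • ∑ n ∈ Finset.range m, (ζ ^ (k * n))⁻¹ • V n) *
      star (c • ∑ n ∈ Finset.range m, (ζ ^ (k * n))⁻¹ • V n) =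
      ∑ i ∈ Finset.range m, ∑ j ∈ Finset.range m,
        (star c * c * (star ((ζ ^ (j * k))⁻¹) * (ζ ^ (i * k))⁻¹)) • (V i * star (V j)) := by
    intro k
    rw [star_smul, star_sum, smul_mul_smul_comm, Finset.sum_mul, Finset.smul_sum]
    refine Finset.sum_congr rfl fun i _ => ?_
    rw [Finset.mul_sum, Finset.smul_sum]
    refine Finset.sum_congr rfl fun j _ => ?_
    rw [star_smul, smul_mul_smul_comm, smul_smul, mul_comm k, mul_comm k]
    congr 1
    ring
  simp only [e]
  rw [Finset.sum_comm]
  refine Finset.sum_congr rfl fun i hi => ?_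
  rw [Finset.sum_comm]
  have e2 : ∀ j ∈ Finset.range m, ∑ k ∈ Finset.range m,
      (star c * c * (star ((ζ ^ (j * k))⁻¹) * (ζ ^ (i * k))⁻¹)) • (V i * star (V j)) =
      if j = i then V i * star (V i) else 0 := by
    intro j hj
    rw [← Finset.sum_smul, ← Finset.mul_sum,
      aux_orth hm hζ (Finset.mem_range.1 hj) (Finset.mem_range.1 hi)]
    split_ifs with h
    · subst h; rw [hc, one_smul]
    · simp
  rw [Finset.sum_congr rfl e2, Finset.sum_ite_eq' , if_pos hi]

theorem aux_ext {F : Type*} [Field F] {A B : l2Poly F →L[ℂ] l2Poly F}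
    (h : ∀ r : Polynomial F, A (lp.single 2 r 1) = B (lp.single 2 r 1)) : A = B := by
  ext1 f
  have hs := lp.hasSum_single (E := fun _ : Polynomial F => ℂ) (p := 2) (by simp) f
  have e : ∀ r : Polynomial F, A (lp.single 2 r (f r)) = B (lp.single 2 r (f r)) := by
    intro r
    have : (lp.single 2 r (f r) : l2Poly F) = (f r) • lp.single 2 r 1 := by
      rw [← lp.single_smul]; simp
    rw [this, map_smul, map_smul, h]
  have h1 := hs.mapL A
  have h2 := hs.mapL B
  simp only [e] at h1
  exact h1.unique h2

theorem aux_inner {F : Type*} [Field F] (r s : Polynomial F) :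
    inner ℂ (lp.single 2 r 1 : l2Poly F) (lp.single 2 s 1) = if r = s then (1 : ℂ) else 0 := by
  rw [lp.inner_single_left, lp.single_apply]
  by_cases h : r = s
  · subst h; simp
  · simp [h]

theorem aux_ext2 {F : Type*} [Field F] {x y : l2Poly F}
    (h : ∀ r : Polynomial F, inner ℂ (lp.single 2 r 1 : l2Poly F) x = inner ℂ (lp.single 2 r 1) y) :
    x = y := by
  ext r
  have := h r
  simpa [lp.inner_single_left] using this

/-- operators mapping basis vectors to basis vectors -/
theorem aux_adj_same {F : Type*} [Field F] {A : l2Poly F →L[ℂ] l2Poly F}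
    {f : Polynomial F → Polynomial F} (hf : Function.Injective f)
    (hA : ∀ r, A (lp.single 2 r 1) = lp.single 2 (f r) 1) : star A * A = 1 := by
  refine aux_ext fun s => aux_ext2 fun r => ?_
  rw [ContinuousLinearMap.star_eq_adjoint, mul_apply_eq_comp,
    ContinuousLinearMap.adjoint_inner_right, hA, hA, aux_inner, ContinuousLinearMap.one_apply,
    aux_inner]
  simp [hf.eq_iff]

theorem aux_adj_diff {F : Type*} [Field F] {A B : l2Poly F →L[ℂ] l2Poly F}
    {f g : Polynomial F → Polynomial F} (hf : ∀ r s, f r ≠ g s)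
    (hA : ∀ r, A (lp.single 2 r 1) = lp.single 2 (f r) 1)
    (hB : ∀ r, B (lp.single 2 r 1) = lp.single 2 (g r) 1) : star A * B = 0 := by
  refine aux_ext fun s => aux_ext2 fun r => ?_
  rw [ContinuousLinearMap.star_eq_adjoint, mul_apply_eq_comp,
    ContinuousLinearMap.adjoint_inner_right, hA, hB, aux_inner, ContinuousLinearMap.zero_apply,
    inner_zero_right, if_neg (hf r s)]

/-- With `b` a generator of `Fˣ` and `ζ` a primitive `(q-1)`-th root of unity, the operators
`S_T, W_0, …, W_{q-2}` on `ℓ²(F[T])` are `q` isometries whose range projections are mutually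
orthogonal and sum to the identity, and conjugation by the unitary `S_b` fixes `S_T` and
multiplies `W_k` by `ζ^k`. -/
theorem cuntz_algebra_diagonalized_relations (F : Type*) [Field F] [Fintype F]
    (b : Fˣ) (hb : ∀ u : Fˣ, u ∈ Subgroup.zpowers b)
    (ζ : ℂ) (hζ : IsPrimitiveRoot ζ (Fintype.card F - 1))
    (U : Polynomial F → (l2Poly F →L[ℂ] l2Poly F))
    (S : Polynomial F → (l2Poly F →L[ℂ] l2Poly F))
    (hU : ∀ a r : Polynomial F, U a (lp.single 2 r 1) = lp.single 2 (a + r) 1)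
    (hS : ∀ c : Polynomial F, c ≠ 0 → ∀ r : Polynomial F,
      S c (lp.single 2 r 1) = lp.single 2 (c * r) 1) :
    (ContinuousLinearMap.adjoint (S Polynomial.X) * S Polynomial.X = 1) ∧
    (∀ k < Fintype.card F - 1,
      ContinuousLinearMap.adjoint (Wop F U S b ζ k) * Wop F U S b ζ k = 1) ∧
    (∀ k < Fintype.card F - 1,
      (S Polynomial.X * ContinuousLinearMap.adjoint (S Polynomial.X)) *
        (Wop F U S b ζ k * ContinuousLinearMap.adjoint (Wop F U S b ζ k)) = 0) ∧
    (∀ k < Fintype.card F - 1, ∀ l < Fintype.card F - 1, k ≠ l →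
      (Wop F U S b ζ k * ContinuousLinearMap.adjoint (Wop F U S b ζ k)) *
        (Wop F U S b ζ l * ContinuousLinearMap.adjoint (Wop F U S b ζ l)) = 0) ∧
    (S Polynomial.X * ContinuousLinearMap.adjoint (S Polynomial.X) +
      ∑ k ∈ Finset.range (Fintype.card F - 1),
        Wop F U S b ζ k * ContinuousLinearMap.adjoint (Wop F U S b ζ k) = 1) ∧
    (S (Polynomial.C (b : F)) * S Polynomial.X *
        ContinuousLinearMap.adjoint (S (Polynomial.C (b : F))) = S Polynomial.X) ∧
    (∀ k < Fintype.card F - 1,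
      S (Polynomial.C (b : F)) * Wop F U S b ζ k *
          ContinuousLinearMap.adjoint (S (Polynomial.C (b : F))) =
        ζ ^ k • Wop F U S b ζ k) := by
  have hm : 0 < Fintype.card F - 1 := by have := Fintype.one_lt_card (α := F); omega
  have hcard : ((Fintype.card F - 1 : ℕ) : ℝ) = (Fintype.card F : ℝ) - 1 := by
    rw [Nat.cast_sub (by omega)]; simp
  have hord : orderOf b = Fintype.card F - 1 := by
    rw [orderOf_eq_card_of_forall_mem_zpowers hb, Nat.card_eq_fintype_card, Fintype.card_units]
  let V : ℕ → (l2Poly F →L[ℂ] l2Poly F) := fun n =>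
    U (Polynomial.C ((b ^ n : Fˣ) : F)) * S Polynomial.X
  have hW : ∀ k, Wop F U S b ζ k = ((Real.sqrt ((Fintype.card F : ℝ) - 1) : ℂ))⁻¹ •
    ∑ n ∈ Finset.range (Fintype.card F - 1), (ζ ^ (k * n))⁻¹ • V n := fun k => rfl
  have hc : star ((Real.sqrt ((Fintype.card F : ℝ) - 1) : ℂ))⁻¹ *
      ((Real.sqrt ((Fintype.card F : ℝ) - 1) : ℂ))⁻¹ * (Fintype.card F - 1 : ℕ) = 1 := by
    rw [← hcard]
    have hpos : (0 : ℝ) < ((Fintype.card F - 1 : ℕ) : ℝ) := by exact_mod_cast hm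
    rw [star_inv₀, show star ((Real.sqrt ((Fintype.card F - 1 : ℕ) : ℝ) : ℂ)) =
      (Real.sqrt ((Fintype.card F - 1 : ℕ) : ℝ) : ℂ) from Complex.conj_ofReal _, ← mul_inv,
      ← Complex.ofReal_mul, Real.mul_self_sqrt hpos.le]
    push_cast
    exact inv_mul_cancel₀ (by exact_mod_cast hpos.ne')
  have hX : ∀ r, S Polynomial.X (lp.single 2 r 1) = lp.single 2 (Polynomial.X * r) 1 :=
    hS _ Polynomial.X_ne_zero
  have hVr : ∀ n r, V n (lp.single 2 r 1) =
      lp.single 2 (Polynomial.C ((b ^ n : Fˣ) : F) + Polynomial.X * r) 1 := by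
    intro n r
    rw [mul_apply_eq_comp, hX, hU]
  have hSS : star (S Polynomial.X) * S Polynomial.X = 1 :=
    aux_adj_same (mul_right_injective₀ Polynomial.X_ne_zero) hX
  have hVV : ∀ i < Fintype.card F - 1, ∀ j < Fintype.card F - 1,
      star (V i) * V j = if i = j then 1 else 0 := by
    intro i hi j hj
    split_ifs with h
    · subst h
      exact aux_adj_same
        ((add_right_injective _).comp (mul_right_injective₀ Polynomial.X_ne_zero)) (hVr i)
    · refine aux_adj_diff (fun r s hrs => h ?_) (hVr i) (hVr j)
      have h1 := congrArg (Polynomial.eval 0) hrs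
      simp only [Polynomial.eval_add, Polynomial.eval_C, Polynomial.eval_mul, Polynomial.eval_X,
        zero_mul, add_zero] at h1
      exact pow_injOn_Iio_orderOf (by simpa [hord] using hi) (by simpa [hord] using hj)
        (Units.ext h1)
  have hSV : ∀ j, star (S Polynomial.X) * V j = 0 := by
    intro j
    refine aux_adj_diff (fun r s hrs => ?_) hX (hVr j)
    have h1 := congrArg (Polynomial.eval 0) hrs
    simp only [Polynomial.eval_add, Polynomial.eval_C, Polynomial.eval_mul, Polynomial.eval_X,
        zero_mul, add_zero] at h1
    exact (b ^ j).ne_zero h1.symm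
  have hVS : ∀ j, star (V j) * S Polynomial.X = 0 := by
    intro j
    have := congrArg star (hSV j)
    simpa using this
  have hsum : S Polynomial.X * star (S Polynomial.X) +
      ∑ n ∈ Finset.range (Fintype.card F - 1), V n * star (V n) = 1 := by
    refine aux_ext fun p => ?_
    rw [ContinuousLinearMap.one_apply]
    have hp : p = Polynomial.C (p.coeff 0) + Polynomial.X * p.divX := by
      conv_lhs => rw [← Polynomial.X_mul_divX_add p]
      rw [add_comm]
    by_cases h0 : p.coeff 0 = 0
    · have e : (lp.single 2 p 1 : l2Poly F) = S Polynomial.X (lp.single 2 p.divX 1) := by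
        rw [hX]; congr 1; rw [h0] at hp; simpa using hp
      rw [e, ← mul_apply_eq_comp, add_mul, mul_assoc, hSS, Finset.sum_mul]
      simp [mul_assoc, hVS]
    · obtain ⟨n, hn, hbn⟩ : ∃ n < Fintype.card F - 1, b ^ n = Units.mk0 _ h0 := by
        have := hb (Units.mk0 _ h0)
        rw [← mem_powers_iff_mem_zpowers, (isOfFinOrder_of_finite b).mem_powers_iff_mem_range_orderOf] at this
        obtain ⟨n, hn, e⟩ := Finset.mem_image.1 this
        exact ⟨n, by simpa [hord] using hn, e⟩
      have e : (lp.single 2 p 1 : l2Poly F) = V n (lp.single 2 p.divX 1) := by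
        rw [hVr, hbn]; congr 1
      rw [e, ← mul_apply_eq_comp, add_mul, mul_assoc, hSV, Finset.sum_mul,
        Finset.sum_eq_single n]
      · rw [mul_assoc, hVV n hn n hn]; simp
      · intro j hj hjn
        rw [mul_assoc, hVV j (Finset.mem_range.1 hj) n hn, if_neg hjn, mul_zero]
      · intro h; exact absurd (Finset.mem_range.2 hn) h
  have hCb : Polynomial.C (b : F) ≠ 0 := by simp
  have hB := hS _ hCb
  have hBB : S (Polynomial.C (b : F)) * star (S (Polynomial.C (b : F))) = 1 := by
    refine aux_ext fun p => ?_
    have e : (lp.single 2 p 1 : l2Poly F) = S (Polynomial.C (b : F))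
        (lp.single 2 (Polynomial.C ((b⁻¹ : Fˣ) : F) * p) 1) := by
      rw [hB, ← mul_assoc, ← Polynomial.C_mul]; simp
    rw [e, ← mul_apply_eq_comp, mul_assoc,
      aux_adj_same (mul_right_injective₀ hCb) hB]
    simp
  have hBX : S (Polynomial.C (b : F)) * S Polynomial.X = S Polynomial.X * S (Polynomial.C (b : F)) := by
    refine aux_ext fun p => ?_
    rw [mul_apply_eq_comp, mul_apply_eq_comp, hX, hB, hB, hX, mul_left_comm]
  have hBV : ∀ n, S (Polynomial.C (b : F)) * V n = V (n + 1) * S (Polynomial.C (b : F)) := by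
    intro n
    refine aux_ext fun p => ?_
    change S (Polynomial.C (b : F)) (V n (lp.single 2 p 1)) =
      V (n + 1) (S (Polynomial.C (b : F)) (lp.single 2 p 1))
    rw [hVr, hB, hB, hVr, mul_add,
      mul_left_comm, ← Polynomial.C_mul, pow_succ', Units.val_mul]
  have hVm : V (Fintype.card F - 1) = V 0 := by
    simp only [V]
    rw [← hord, pow_orderOf_eq_one, pow_zero]
  have hWW : ∀ k < Fintype.card F - 1, ∀ l < Fintype.card F - 1,
      star (Wop F U S b ζ k) * Wop F U S b ζ l = if k = l then 1 else 0 := by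
    intro k hk l hl
    rw [hW, hW]
    exact aux_WW hm hζ V _ hc hVV hk hl
  simp only [← ContinuousLinearMap.star_eq_adjoint]
  refine ⟨hSS, ?_, ?_, ?_, ?_, ?_, ?_⟩
  · intro k hk
    rw [hWW k hk k hk, if_pos rfl]
  · intro k hk
    have : star (S Polynomial.X) * Wop F U S b ζ k = 0 := by
      rw [hW, mul_smul_comm, Finset.mul_sum, Finset.sum_eq_zero, smul_zero]
      intro i _
      rw [mul_smul_comm, hSV, smul_zero]
    rw [mul_assoc, ← mul_assoc (star (S Polynomial.X)), this]
    simp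
  · intro k hk l hl hkl
    rw [mul_assoc, ← mul_assoc (star (Wop F U S b ζ k)), hWW k hk l hl, if_neg hkl]
    simp
  · rw [← hsum]
    congr 1
    simp only [hW]
    exact aux_sum hm hζ V _ hc
  · rw [hBX, mul_assoc, hBB, mul_one]
  · intro k hk
    have h0 : ζ ≠ 0 := hζ.ne_zero hm.ne'
    have e : S (Polynomial.C (b : F)) * Wop F U S b ζ k =
        (ζ ^ k • Wop F U S b ζ k) * S (Polynomial.C (b : F)) := by
      rw [hW, mul_smul_comm, smul_comm, smul_mul_assoc]
      congr 1
      rw [Finset.mul_sum, smul_mul_assoc, Finset.sum_mul, Finset.smul_sum]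
      let g : ℕ → (l2Poly F →L[ℂ] l2Poly F) := fun n =>
        ζ ^ k • ((ζ ^ (k * n))⁻¹ • V n * S (Polynomial.C (b : F)))
      have hg : ∀ n, S (Polynomial.C (b : F)) * (ζ ^ (k * n))⁻¹ • V n = g (n + 1) := by
        intro n
        simp only [g]
        rw [mul_smul_comm, hBV, smul_mul_assoc, smul_smul]
        congr 1
        rw [mul_add, pow_add, mul_one]
        field_simp
      have hgm : g (Fintype.card F - 1) = g 0 := by
        simp only [g]
        rw [hVm, mul_comm k, pow_mul, hζ.pow_eq_one]
        simp
      simp only [hg]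
      have h1 := Finset.sum_range_succ g (Fintype.card F - 1)
      rw [Finset.sum_range_succ', hgm] at h1
      exact add_right_cancel h1
    rw [e, mul_assoc, hBB, mul_one]
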